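/- Let M be a λ-term. If there exist a ∈ T_r(M) and n ∈ ℕ such that L_r^n(a) is a positive →_r-normal form, then L^n(M) is a β-normal form. -/

import Mathlib

/-! Ordinary λ-terms, in de Bruijn notation. -/
inductive Lam : Type
  | var : ℕ → Lam
  | lam : Lam → Lam
  | app : Lam → Lam → Lam
  deriving DecidableEq

namespace Lam

/-- Shift the free indices `≥ d` up by one. -/
def lift (d : ℕ) : Lam → Lam
  | var n => if n < d then var n else var (n + 1)
  | lam M => lam (lift (d + 1) M)
  | app P Q => app (lift d P) (lift d Q)

/-- Capture-avoiding substitution of `N` for the free variable `k`. -/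
def subst : Lam → ℕ → Lam → Lam
  | var n, k, N => if n = k then N else if k < n then var (n - 1) else var n
  | lam M, k, N => lam (subst M (k + 1) (lift 0 N))
  | app P Q, k, N => app (subst P k N) (subst Q k N)

/-- Number of free occurrences of the variable `k`. -/
def count (k : ℕ) : Lam → ℕ
  | var n => if n = k then 1 else 0
  | lam M => count (k + 1) M
  | app P Q => count k P + count k Q

/-- One-step β-reduction. -/
inductive Beta : Lam → Lam → Prop
  | beta (M N : Lam) : Beta (app (lam M) N) (subst M 0 N)
  | lam {M M'} : Beta M M' → Beta (lam M) (lam M')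
  | appL {P P' Q} : Beta P P' → Beta (app P Q) (app P' Q)
  | appR {P Q Q'} : Beta Q Q' → Beta (app P Q) (app P Q')

/-- The head of the application spine is a variable, with no λ on the spine. -/
def neutral : Lam → Bool
  | var _ => true
  | lam _ => false
  | app P _ => neutral P

/-- Head-normal forms: `λx₁…λxₘ. x N₁ … Nₙ`. -/
def isHNF : Lam → Prop
  | var _ => True
  | lam M => isHNF M
  | app P _ => neutral P = true

/-- The head-reduction function `H`: contracts the head redex, identity on head-normal
forms. -/
def H : Lam → Lam
  | var n => var n
  | lam M => lam (H M)
  | app (lam P) Q => subst P 0 Q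
  | app (var n) Q => app (var n) Q
  | app (app P₁ P₂) Q => app (H (app P₁ P₂)) Q

/-- The left-parallel reduction function `L`: identity on β-normal forms, propagated to
the arguments on head-normal forms, contraction of the head redex otherwise. -/
def L : Lam → Lam
  | var n => var n
  | lam M => lam (L M)
  | app (lam P) Q => subst P 0 Q
  | app (var n) Q => app (var n) (L Q)
  | app (app P₁ P₂) Q =>
      if neutral (app P₁ P₂) then app (L (app P₁ P₂)) (L Q)
      else app (L (app P₁ P₂)) Q

/-- Iterated application `M N₁ … Nₙ`. -/
def mkApps (M : Lam) (Ns : List Lam) : Lam := Ns.foldl app M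

/-- All free variables are `< d`. -/
def ClosedAt (d : ℕ) : Lam → Prop
  | var n => n < d
  | lam M => ClosedAt (d + 1) M
  | app P Q => ClosedAt d P ∧ ClosedAt d Q

/-- `M` is head-normalizable: it β-reduces in finitely many steps to a head-normal form. -/
def HeadNormalizable (M : Lam) : Prop :=
  ∃ N, Relation.ReflTransGen Beta M N ∧ isHNF N

/-- `M` is a β-normal form: it contains no β-redex, i.e. admits no β-step. -/
def BetaNF (M : Lam) : Prop := ¬∃ N, Beta M N

/-- `M` is β-normalizable: it β-reduces in finitely many steps to a β-normal form. -/
def BetaNormalizable (M : Lam) : Prop :=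
  ∃ N, Relation.ReflTransGen Beta M N ∧ BetaNF N

/-- `M` is strongly β-normalizable: no infinite β-reduction sequence starts from `M`. -/
def StronglyNormalizable (M : Lam) : Prop := Acc (fun N M' => Beta M' N) M

end Lam

/-! Rigid resource terms (the nonzero ones), in de Bruijn notation:
`a ::= x | λx.a | ⟨c⟩d⃗` with `d⃗` a list of rigid terms.
The term `0` is represented by `none : Option Rig`. -/
inductive Rig : Type
  | var : ℕ → Rig
  | lam : Rig → Rig
  | app : Rig → List Rig → Rig

namespace Rig

mutual
/-- Number of free occurrences of the variable `k` in a rigid term. -/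
def countR (k : ℕ) : Rig → ℕ
  | var n => if n = k then 1 else 0
  | lam a => countR (k + 1) a
  | app c ds => countR k c + countRList k ds
termination_by a => sizeOf a

def countRList (k : ℕ) : List Rig → ℕ
  | [] => 0
  | d :: ds => countR k d + countRList k ds
termination_by ds => sizeOf ds
end

mutual
/-- Shift the free indices `≥ d` up by one. -/
def liftR (d : ℕ) : Rig → Rig
  | var n => if n < d then var n else var (n + 1)
  | lam a => lam (liftR (d + 1) a)
  | app c ds => app (liftR d c) (liftRList d ds)
termination_by a => sizeOf a

def liftRList (d : ℕ) : List Rig → List Rig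
  | [] => []
  | a :: as => liftR d a :: liftRList d as
termination_by as => sizeOf as
end

mutual
/-- Rigid substitution `a[b⃗/k]`: the list `b⃗` is distributed, in order, over the
free occurrences of the variable `k`; the result is `none` (i.e. `0`) when
`|b⃗| ≠ n_k(a)`. -/
def rsubst (k : ℕ) : Rig → List Rig → Option Rig
  | var n, bs =>
      if n = k then (match bs with | [b] => some b | _ => none)
      else (match bs with
            | [] => some (if k < n then var (n - 1) else var n)
            | _ => none)
  | lam a, bs => (rsubst (k + 1) a (liftRList 0 bs)).map lam
  | app c ds, bs =>
      match rsubst k c (bs.take (countR k c)), rsubstList k ds (bs.drop (countR k c)) with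
      | some c', some ds' => some (app c' ds')
      | _, _ => none
termination_by a _ => sizeOf a

def rsubstList (k : ℕ) : List Rig → List Rig → Option (List Rig)
  | [], bs => if bs.isEmpty then some [] else none
  | d :: ds, bs =>
      match rsubst k d (bs.take (countR k d)), rsubstList k ds (bs.drop (countR k d)) with
      | some d', some ds' => some (d' :: ds')
      | _, _ => none
termination_by ds _ => sizeOf ds
end

/-- One-step rigid resource reduction `→_r` (contextual closure of
`⟨λx.a⟩b⃗ →_r a[b⃗/x]`); the result may be `0` (i.e. `none`), which annihilates
the surrounding context. -/
inductive RStep : Rig → Option Rig → Prop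
  | beta (a : Rig) (bs : List Rig) : RStep (app (lam a) bs) (rsubst 0 a bs)
  | lam {a r} : RStep a r → RStep (lam a) (r.map lam)
  | head {c r} (ds : List Rig) : RStep c r → RStep (app c ds) (r.map (fun c' => app c' ds))
  | arg {d r} (c : Rig) (ds₁ ds₂ : List Rig) :
      RStep d r → RStep (app c (ds₁ ++ d :: ds₂)) (r.map (fun d' => app c (ds₁ ++ d' :: ds₂)))

/-- `→_r` on rigid terms extended with `0`; `0` is inert. -/
inductive RStepO : Option Rig → Option Rig → Prop
  | mk {a r} : RStep a r → RStepO (some a) r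

/-- `r` is a `→_r`-normal form (`0` is one). -/
def RNormal (r : Option Rig) : Prop := ¬∃ r', RStepO r r'

/-- The head of the application spine is a variable, with no λ on the spine. -/
def rNeutral : Rig → Bool
  | var _ => true
  | lam _ => false
  | app c _ => rNeutral c

/-- Rigid head-normal forms among nonzero terms: `λx₁…λxₘ.⟨…⟨x⟩d⃗₁…⟩d⃗ₙ`
(the term `0` is a head-normal form, but it is treated separately). -/
def rIsHNF : Rig → Prop
  | var _ => True
  | lam a => rIsHNF a
  | app c _ => rNeutral c = true

/-- The rigid head-reduction function `H_r`: contracts the head redex, identity on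
head-normal forms; the result may be `0` (i.e. `none`). -/
def Hr : Rig → Option Rig
  | var n => some (var n)
  | lam a => (Hr a).map lam
  | app (lam a) bs => rsubst 0 a bs
  | app (var n) ds => some (app (var n) ds)
  | app (app c₁ c₂) ds => (Hr (app c₁ c₂)).map (fun c' => app c' ds)

/-- `H_r` extended to terms-or-`0`. -/
def HrO : Option Rig → Option Rig := fun r => r.bind Hr

mutual
/-- The rigid left-parallel reduction function `L_r`: identity on `→_r`-normal forms,
applied componentwise to the argument lists on head-normal forms, contraction of the
head redex otherwise; the result may be `0` (i.e. `none`). -/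
def Lr : Rig → Option Rig
  | var n => some (var n)
  | lam a => (Lr a).map lam
  | app (lam a) bs => rsubst 0 a bs
  | app (var n) ds => (LrList ds).map (fun ds' => app (var n) ds')
  | app (app c₁ c₂) ds =>
      if rNeutral (app c₁ c₂) then
        match Lr (app c₁ c₂), LrList ds with
        | some c', some ds' => some (app c' ds')
        | _, _ => none
      else (Lr (app c₁ c₂)).map (fun c' => app c' ds)
termination_by a => sizeOf a

def LrList : List Rig → Option (List Rig)
  | [] => some []
  | d :: ds =>
      match Lr d, LrList ds with
      | some d', some ds' => some (d' :: ds')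
      | _, _ => none
termination_by ds => sizeOf ds
end

/-- `L_r` extended to terms-or-`0`. -/
def LrO : Option Rig → Option Rig := fun r => r.bind Lr

/-- Positive resource terms: no empty list/multiset occurs as the argument of an
application. -/
inductive rPositive : Rig → Prop
  | var (n : ℕ) : rPositive (var n)
  | lam {a} : rPositive a → rPositive (lam a)
  | app {c : Rig} {ds : List Rig} :
      rPositive c → ds ≠ [] → (∀ d ∈ ds, rPositive d) → rPositive (app c ds)

end Rig

/-- The rigid expansion `T_r(M)` of a λ-term (equivalently, the support of its Taylor
expansion, with multisets presented by lists: `Texp M` is closed under permutation of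
argument lists). -/
def Texp : Lam → Set Rig
  | Lam.var n => {Rig.var n}
  | Lam.lam M => {a | ∃ b ∈ Texp M, a = Rig.lam b}
  | Lam.app P Q => {a | ∃ c ∈ Texp P, ∃ ds : List Rig, (∀ d ∈ ds, d ∈ Texp Q) ∧ a = Rig.app c ds}

namespace Rig

/-- The support of the `n`-linear substitution `∂_k a · b̄`, where the multiset `b̄` is
presented by the list `bs`: the finite formal sum (multiset) of all nonzero results of
rigid substitutions along bijective assignments, i.e. permutations of `bs`. -/
def permSubst (k : ℕ) (a : Rig) (bs : List Rig) : Multiset Rig :=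
  ↑(bs.permutations.filterMap (fun bs' => rsubst k a bs'))

/-- One step of non-erasing ε-resource reduction `→^{¬e}_{∂ε}` out of a single resource
term, producing a finite formal sum (a multiset) of resource terms: non-erasing resource
β-steps `⟨λx.a⟩b̄ → ∂_x a · b̄` (with `x ∈ FV(a)`) and resource σ₁-steps, under any
context. -/
inductive NEStep : Rig → Multiset Rig → Prop
  | beta {a : Rig} (bs : List Rig) :
      0 < countR 0 a → NEStep (app (lam a) bs) (permSubst 0 a bs)
  | sigma (a : Rig) (ts qs : List Rig) :
      NEStep (app (app (lam a) ts) qs) {app (lam (app a (liftRList 0 qs))) ts}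
  | lam {a σ} : NEStep a σ → NEStep (lam a) (σ.map lam)
  | head {c σ} (ds : List Rig) : NEStep c σ → NEStep (app c ds) (σ.map (fun c' => app c' ds))
  | arg {d σ} (c : Rig) (ds₁ ds₂ : List Rig) :
      NEStep d σ → NEStep (app c (ds₁ ++ d :: ds₂)) (σ.map (fun d' => app c (ds₁ ++ d' :: ds₂)))

/-- Non-erasing ε-resource reduction on finite formal sums, extended by linearity. -/
def NEStepSum (σ τ : Multiset Rig) : Prop :=
  ∃ (a : Rig) (ρ υ : Multiset Rig), σ = a ::ₘ ρ ∧ NEStep a υ ∧ τ = υ + ρ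

/-- `σ` is a `→^{¬e}_{∂ε}`-normal form. -/
def NENormal (σ : Multiset Rig) : Prop := ¬∃ τ, NEStepSum σ τ

end Rig

/-- One step of non-erasing ε-reduction on λ-terms: non-erasing β-steps
`(λx.M)N → M[N/x]` (with `x ∈ FV(M)`) together with σ₁-steps
`((λx.M)N)P → (λx.MP)N` (`x ∉ FV(P)`), under any context. -/
inductive NEeps : Lam → Lam → Prop
  | beta {M : Lam} (N : Lam) :
      0 < Lam.count 0 M → NEeps (Lam.app (Lam.lam M) N) (Lam.subst M 0 N)
  | sigma (M N P : Lam) :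
      NEeps (Lam.app (Lam.app (Lam.lam M) N) P)
        (Lam.app (Lam.lam (Lam.app M (Lam.lift 0 P))) N)
  | lam {M M'} : NEeps M M' → NEeps (Lam.lam M) (Lam.lam M')
  | appL {P P' Q} : NEeps P P' → NEeps (Lam.app P Q) (Lam.app P' Q)
  | appR {P Q Q'} : NEeps Q Q' → NEeps (Lam.app P Q) (Lam.app P Q')

/-- The set `S` of λ-terms. -/
inductive SLam : Lam → Prop
  | varApp (n : ℕ) (Ms : List Lam) :
      (∀ M ∈ Ms, SLam M) → SLam (Lam.mkApps (Lam.var n) Ms)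
  | lam {M} : SLam M → SLam (Lam.lam M)
  | redex (M₀ M₁ : Lam) (Ms : List Lam) :
      SLam M₁ → SLam (Lam.mkApps (Lam.subst M₀ 0 M₁) Ms) →
      SLam (Lam.mkApps (Lam.app (Lam.lam M₀) M₁) Ms)

/-- λI-terms: every abstraction binds a variable occurring free in its body. -/
def LamI : Lam → Prop
  | Lam.var _ => True
  | Lam.lam M => LamI M ∧ 0 < Lam.count 0 M
  | Lam.app P Q => LamI P ∧ LamI Q

/-!
An approximant of `M`, i.e. an element of `T_r(M)`, has the same shape as `M`, except that each
argument of `M` is replaced by a list of approximants of it. A head redex of `M` is therefore a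
head redex in each approximant, and rigid substitution only distributes approximants of `N` over
the occurrences of a variable in an approximant of `M`: if its result is nonzero, it approximates
`M[N/x]`. Hence a nonzero `L_r(a)` approximates `L(M)` whenever `a` approximates `M`, and
`L_r^n(a)` approximates `L^n(M)`. A positive approximant retains a copy of every subterm, so a
β-redex in `L^n(M)` would leave a redex in `L_r^n(a)`.
-/

namespace Lam

theorem L_app_of_neutral {P : Lam} (Q : Lam) (hP : neutral P) :
    L (app P Q) = app (L P) (L Q) := by
  cases P with
  | var n => rw [L, L]
  | lam P => cases hP
  | app P₁ P₂ => rw [L, if_pos hP]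

theorem L_app_app_of_not_neutral {P₁ P₂ : Lam} (Q : Lam) (hP : ¬neutral (app P₁ P₂)) :
    L (app (app P₁ P₂) Q) = app (L (app P₁ P₂)) Q := by
  rw [L, if_neg hP]

end Lam

namespace Rig

variable {M N P Q : Lam} {a b c d e : Rig} {bs ds es : List Rig} {k n : ℕ}

theorem lam_mem_Texp : lam a ∈ Texp (.lam M) ↔ a ∈ Texp M := by
  simp [Texp]

theorem app_mem_Texp : app c ds ∈ Texp (.app P Q) ↔ c ∈ Texp P ∧ ∀ d ∈ ds, d ∈ Texp Q := by
  simp [Texp]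

theorem rNeutral_eq_neutral_of_mem_Texp (ha : a ∈ Texp M) : rNeutral a = Lam.neutral M := by
  induction M generalizing a with
  | var n =>
    obtain rfl := ha
    rfl
  | lam M =>
    obtain ⟨a, -, rfl⟩ := ha
    rfl
  | app P Q ihP =>
    obtain ⟨c, hc, ds, -, rfl⟩ := ha
    rw [rNeutral, Lam.neutral]
    exact ihP hc

theorem liftRList_eq_map (d : ℕ) (as : List Rig) : liftRList d as = as.map (liftR d) := by
  induction as with
  | nil => rw [liftRList, List.map_nil]
  | cons a as ih => rw [liftRList, List.map_cons, ih]

theorem liftR_mem_Texp (d : ℕ) (ha : a ∈ Texp M) : liftR d a ∈ Texp (M.lift d) := by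
  induction M generalizing d a with
  | var n =>
    obtain rfl := ha
    rw [liftR, Lam.lift]
    split_ifs <;> rfl
  | lam M ih =>
    obtain ⟨a, ha, rfl⟩ := ha
    rw [liftR]
    exact lam_mem_Texp.2 (ih _ ha)
  | app P Q ihP ihQ =>
    obtain ⟨c, hc, ds, hds, rfl⟩ := ha
    rw [liftR, liftRList_eq_map]
    exact app_mem_Texp.2 ⟨ihP d hc, List.forall_mem_map.2 fun e he => ihQ d (hds e he)⟩

theorem mem_rsubst_var_self : c ∈ rsubst k (var k) bs ↔ bs = [c] := by
  rcases bs with _ | ⟨b, _ | ⟨b', bs⟩⟩ <;> simp [rsubst]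

theorem mem_rsubst_var_of_ne (h : n ≠ k) :
    c ∈ rsubst k (var n) bs ↔ bs = [] ∧ c = if k < n then var (n - 1) else var n := by
  rcases bs with _ | ⟨b, _ | ⟨b', bs⟩⟩ <;> simp [rsubst, h, eq_comm]

theorem rsubst_app (k : ℕ) (c : Rig) (ds bs : List Rig) :
    rsubst k (app c ds) bs = Option.map₂ app (rsubst k c (bs.take (countR k c)))
      (rsubstList k ds (bs.drop (countR k c))) := by
  rw [rsubst]
  cases rsubst k c (bs.take (countR k c)) <;>
    cases rsubstList k ds (bs.drop (countR k c)) <;> rfl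

theorem rsubstList_cons (k : ℕ) (d : Rig) (ds bs : List Rig) :
    rsubstList k (d :: ds) bs = Option.map₂ List.cons (rsubst k d (bs.take (countR k d)))
      (rsubstList k ds (bs.drop (countR k d))) := by
  rw [rsubstList]
  cases rsubst k d (bs.take (countR k d)) <;>
    cases rsubstList k ds (bs.drop (countR k d)) <;> rfl

theorem exists_mem_rsubst_of_mem_rsubstList (hes : es ∈ rsubstList k ds bs) (he : e ∈ es) :
    ∃ d ∈ ds, ∃ cs ⊆ bs, e ∈ rsubst k d cs := by
  induction ds generalizing bs es with
  | nil =>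
    obtain ⟨-, rfl⟩ : bs = [] ∧ [] = es := by simpa [rsubstList] using hes
    cases he
  | cons d ds ih =>
    rw [rsubstList_cons, Option.mem_map₂_iff] at hes
    obtain ⟨d', ds', hd', hds', rfl⟩ := hes
    rcases List.mem_cons.1 he with rfl | he
    · exact ⟨d, List.mem_cons_self, _, List.take_subset _ _, hd'⟩
    · obtain ⟨f, hf, cs, hcs, hfe⟩ := ih hds' he
      exact ⟨f, List.mem_cons_of_mem _ hf, cs, List.Subset.trans hcs (List.drop_subset _ _), hfe⟩

theorem mem_Texp_subst_of_mem_rsubst (ha : a ∈ Texp M) (hbs : ∀ b ∈ bs, b ∈ Texp N)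
    (hc : c ∈ rsubst k a bs) : c ∈ Texp (M.subst k N) := by
  induction M generalizing k N a bs c with
  | var n =>
    obtain rfl := ha
    rw [Lam.subst]
    by_cases hn : n = k
    · subst hn
      rw [mem_rsubst_var_self.1 hc] at hbs
      simpa using hbs
    · obtain ⟨-, rfl⟩ := (mem_rsubst_var_of_ne hn).1 hc
      rw [if_neg hn]
      split_ifs <;> rfl
  | lam M ih =>
    obtain ⟨a, ha, rfl⟩ := ha
    rw [rsubst, liftRList_eq_map, Option.mem_map] at hc
    obtain ⟨c, hc, rfl⟩ := hc
    have hlift : ∀ b ∈ bs.map (liftR 0), b ∈ Texp (N.lift 0) :=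
      List.forall_mem_map.2 fun b hb => liftR_mem_Texp 0 (hbs b hb)
    exact lam_mem_Texp.2 (ih ha hlift hc)
  | app P Q ihP ihQ =>
    obtain ⟨f, hf, ds, hds, rfl⟩ := ha
    rw [rsubst_app, Option.mem_map₂_iff] at hc
    obtain ⟨f', ds', hf', hds', rfl⟩ := hc
    refine app_mem_Texp.2 ⟨ihP hf (fun b hb => hbs b (List.mem_of_mem_take hb)) hf', ?_⟩
    intro e he
    obtain ⟨d, hd, cs, hcs, hde⟩ := exists_mem_rsubst_of_mem_rsubstList hds' he
    exact ihQ (hds d hd) (fun b hb => hbs b (List.mem_of_mem_drop (hcs hb))) hde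

theorem LrList_cons (d : Rig) (ds : List Rig) :
    LrList (d :: ds) = Option.map₂ List.cons (Lr d) (LrList ds) := by
  rw [LrList]
  cases Lr d <;> cases LrList ds <;> rfl

theorem exists_mem_Lr_of_mem_LrList (hes : es ∈ LrList ds) (he : e ∈ es) :
    ∃ d ∈ ds, e ∈ Lr d := by
  induction ds generalizing es with
  | nil =>
    obtain rfl : [] = es := by simpa [LrList] using hes
    cases he
  | cons d ds ih =>
    rw [LrList_cons, Option.mem_map₂_iff] at hes
    obtain ⟨d', ds', hd', hds', rfl⟩ := hes
    rcases List.mem_cons.1 he with rfl | he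
    · exact ⟨d, List.mem_cons_self, hd'⟩
    · obtain ⟨f, hf, hfe⟩ := ih hds' he
      exact ⟨f, List.mem_cons_of_mem _ hf, hfe⟩

theorem Lr_app_of_rNeutral (ds : List Rig) (hc : rNeutral c) :
    Lr (app c ds) = Option.map₂ app (Lr c) (LrList ds) := by
  cases c with
  | var n => rw [Lr, Lr]; rfl
  | lam c => cases hc
  | app c₁ c₂ =>
    rw [Lr, if_pos hc]
    cases Lr (app c₁ c₂) <;> cases LrList ds <;> rfl

theorem Lr_app_app_of_not_rNeutral {c₁ : Rig} {cs : List Rig} (ds : List Rig)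
    (hc : ¬rNeutral (app c₁ cs)) :
    Lr (app (app c₁ cs) ds) = (Lr (app c₁ cs)).map (app · ds) := by
  rw [Lr, if_neg hc]

theorem mem_Texp_L_of_mem_Lr (ha : a ∈ Texp M) (hb : b ∈ Lr a) : b ∈ Texp M.L := by
  induction M generalizing a b with
  | var n =>
    obtain rfl := ha
    obtain rfl : var n = b := by simpa [Lr] using hb
    rfl
  | lam M ih =>
    obtain ⟨a, ha, rfl⟩ := ha
    rw [Lr, Option.mem_map] at hb
    obtain ⟨b, hb, rfl⟩ := hb
    exact lam_mem_Texp.2 (ih ha hb)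
  | app P Q ihP ihQ =>
    obtain ⟨c, hc, ds, hds, rfl⟩ := ha
    have hneutral : rNeutral c = P.neutral := rNeutral_eq_neutral_of_mem_Texp hc
    have hcL : ∀ c' ∈ Lr c, c' ∈ Texp P.L := fun _ => ihP hc
    by_cases hP : P.neutral
    · rw [Lr_app_of_rNeutral ds (hneutral.trans hP), Option.mem_map₂_iff] at hb
      obtain ⟨c', ds', hc', hds', rfl⟩ := hb
      rw [Lam.L_app_of_neutral Q hP]
      refine app_mem_Texp.2 ⟨hcL c' hc', fun e he => ?_⟩
      obtain ⟨d, hd, hde⟩ := exists_mem_Lr_of_mem_LrList hds' he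
      exact ihQ (hds d hd) hde
    · cases P with
      | var n => exact absurd rfl hP
      | lam P =>
        obtain ⟨c, hc, rfl⟩ := hc
        rw [Lr] at hb
        exact mem_Texp_subst_of_mem_rsubst hc hds hb
      | app P₁ P₂ =>
        obtain ⟨c₁, -, cs, -, rfl⟩ := hc
        rw [Lr_app_app_of_not_rNeutral ds (hneutral ▸ hP), Option.mem_map] at hb
        obtain ⟨c', hc', rfl⟩ := hb
        rw [Lam.L_app_app_of_not_neutral Q hP]
        exact app_mem_Texp.2 ⟨hcL c' hc', hds⟩

theorem mem_Texp_iterate_L_of_mem_iterate_LrO {r : Option Rig} (n : ℕ)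
    (hr : ∀ a ∈ r, a ∈ Texp M) (hb : b ∈ LrO^[n] r) : b ∈ Texp (Lam.L^[n] M) := by
  induction n generalizing b with
  | zero => exact hr b hb
  | succ n ih =>
    rw [Function.iterate_succ_apply'] at hb ⊢
    obtain ⟨c, hc, hcb⟩ := Option.bind_eq_some_iff.1 hb
    exact mem_Texp_L_of_mem_Lr (ih hc) hcb

theorem exists_RStep_of_Beta (hMN : Lam.Beta M N) (ha : a ∈ Texp M) (hpos : rPositive a) :
    ∃ r, RStep a r := by
  induction hMN generalizing a with
  | beta M N =>
    obtain ⟨_, ⟨c, -, rfl⟩, ds, -, rfl⟩ := ha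
    exact ⟨_, .beta c ds⟩
  | lam _ ih =>
    obtain ⟨a, ha, rfl⟩ := ha
    cases hpos with
    | lam hpos =>
      obtain ⟨r, hr⟩ := ih ha hpos
      exact ⟨_, .lam hr⟩
  | appL _ ih =>
    obtain ⟨c, hc, ds, -, rfl⟩ := ha
    cases hpos with
    | app hpos =>
      obtain ⟨r, hr⟩ := ih hc hpos
      exact ⟨_, .head ds hr⟩
  | appR _ ih =>
    obtain ⟨c, -, ds, hds, rfl⟩ := ha
    cases hpos with
    | app _ hne hpos =>
      obtain ⟨d, ds, rfl⟩ := List.exists_cons_of_ne_nil hne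
      obtain ⟨r, hr⟩ := ih (hds d List.mem_cons_self) (hpos d List.mem_cons_self)
      exact ⟨_, .arg c [] ds hr⟩

theorem betaNF_of_mem_Texp (ha : a ∈ Texp M) (hpos : rPositive a) (hnormal : ¬∃ r, RStep a r) :
    Lam.BetaNF M :=
  fun ⟨_, hMN⟩ => hnormal (exists_RStep_of_Beta hMN ha hpos)

end Rig

/-- if there are `a ∈ T_r(M)` and `n` such that `L_r^n(a)` is a positive
`→_r`-normal form, then `L^n(M)` is a β-normal form. -/
theorem betaNF_of_Lr_positive {M : Lam} {a : Rig} {n : ℕ} (ha : a ∈ Texp M)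
    (h : ∃ b : Rig, Rig.LrO^[n] (some a) = some b ∧ Rig.rPositive b ∧ ¬∃ r, Rig.RStep b r) :
    Lam.BetaNF (Lam.L^[n] M) := by
  obtain ⟨b, hb, hpos, hnormal⟩ := h
  have hbM : b ∈ Texp (Lam.L^[n] M) :=
    Rig.mem_Texp_iterate_L_of_mem_iterate_LrO n (by simpa using ha) hb
  exact Rig.betaNF_of_mem_Texp hbM hpos hnormal
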